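/- Let κ < 1/2 and 0 < c₁ < c₂ < √2, and let (c,x) ↦ (η_c(x), v_c(x)) be a jointly C¹ family of real functions with 0 < η_c < 1, such that η_c, η_c', η_c'', v_c, ∂_c η_c, ∂_c v_c decay exponentially in x uniformly for c in compact subsets of (c₁,c₂), and such that for each c the pair solves the traveling-wave system −c η_c = 2 v_c (1−η_c) and −c v_c = −( η_c''/(2(1−η_c)) + (η_c')²/(4(1−η_c)²) + v_c² − η_c − κ η_c'' ) on ℝ. Then the function d(c) = E((η_c,v_c)) − c P((η_c,v_c)) is differentiable on (c₁,c₂) with d'(c) = −P((η_c,v_c)); consequently, if c ↦ P((η_c,v_c)) is C¹, then d is twice differentiable with d''(c) = −(d/dc) P((η_c,v_c)). -/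

import Mathlib

open MeasureTheory Real Filter Set

noncomputable section

/-- The hydrodynamical energy
E((η,v)) = ∫ (η')²/(4(1-η)) + v²(1-η) + (1/2)(η² - κ(η')²). -/
def Ehy (κ : ℝ) (η v : ℝ → ℝ) : ℝ :=
  ∫ x : ℝ,
    (deriv η x) ^ 2 / (4 * (1 - η x)) + (v x) ^ 2 * (1 - η x)
      + (1 / 2) * ((η x) ^ 2 - κ * (deriv η x) ^ 2)

/-- The hydrodynamical momentum P((η,v)) = -∫ η v. -/
def Phy (η v : ℝ → ℝ) : ℝ := -∫ x : ℝ, η x * v x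

theorem integrable_exp_neg_mul_abs {C : ℝ} (hC : 0 < C) :
    Integrable (fun x : ℝ => Real.exp (-C * |x|)) := by
  rw [← integrableOn_univ, ← Set.Iic_union_Ioi (a := (0 : ℝ))]
  refine IntegrableOn.union ?_ ?_
  · refine (integrableOn_exp_mul_Iic hC 0).congr_fun (fun x hx => ?_) measurableSet_Iic
    simp [abs_of_nonpos (Set.mem_Iic.1 hx)]
  · refine (integrableOn_exp_mul_Ioi (neg_lt_zero.2 hC) 0).congr_fun (fun x hx => ?_)
      measurableSet_Ioi
    simp [abs_of_pos (Set.mem_Ioi.1 hx)]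

theorem integrable_of_abs_le_exp {f : ℝ → ℝ} {M C : ℝ} (hC : 0 < C) (hf : Continuous f)
    (h : ∀ x, |f x| ≤ M * Real.exp (-C * |x|)) : Integrable f :=
  ((integrable_exp_neg_mul_abs hC).const_mul M).mono' hf.aestronglyMeasurable
    (Filter.Eventually.of_forall h)

theorem abs_slope_le {f f' : ℝ → ℝ} {a b L s t : ℝ}
    (hf : ∀ r ∈ Set.Icc a b, HasDerivAt f (f' r) r) (hL : ∀ r ∈ Set.Icc a b, |f' r| ≤ L)
    (hs : s ∈ Set.Icc a b) (ht : t ∈ Set.Icc a b) : |slope f s t| ≤ L := by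
  have h := (convex_Icc a b).norm_image_sub_le_of_norm_hasDerivWithin_le
    (fun r hr => (hf r hr).hasDerivWithinAt) hL hs ht
  rw [Real.norm_eq_abs, Real.norm_eq_abs] at h
  rw [slope_def_field, abs_div]
  exact div_le_of_le_mul₀ (abs_nonneg _) ((abs_nonneg _).trans (hL s hs)) h

theorem abs_mul_le_of_abs_le {p q P Q : ℝ} (hp : |p| ≤ P) (hq : |q| ≤ Q) : |p * q| ≤ P * Q := by
  rw [abs_mul]
  exact mul_le_mul hp hq (abs_nonneg _) ((abs_nonneg _).trans hp)

/-- The coefficient of `(η')²` in the energy density. -/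
def kineticCoeff (κ s : ℝ) : ℝ := 1 / (4 * (1 - s)) - κ / 2

/-- The part of the density of `E - c P` that does not involve `η'`. -/
def potentialDensity (c s w : ℝ) : ℝ := w ^ 2 * (1 - s) + s ^ 2 / 2 + c * (s * w)

theorem hasDerivAt_kineticCoeff (κ : ℝ) {s : ℝ} (hs : s < 1) :
    HasDerivAt (kineticCoeff κ) (1 / (4 * (1 - s) ^ 2)) s := by
  have h1 : 4 * (1 - s) ≠ 0 := by linarith
  have h2 : 1 - s ≠ 0 := by linarith
  have hk : kineticCoeff κ = fun t => (4 * (1 - t))⁻¹ - κ / 2 := by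
    ext t
    simp [kineticCoeff]
  rw [hk]
  refine (((((hasDerivAt_id' s).const_sub 1).const_mul 4).fun_inv h1).sub_const _).congr_deriv ?_
  norm_num
  field_simp

theorem kineticCoeff_pos {κ s : ℝ} (hκ : κ < 1 / 2) (h0 : 0 < s) (h1 : s < 1) :
    0 < kineticCoeff κ s := by
  have h : 1 / 4 ≤ 1 / (4 * (1 - s)) :=
    one_div_le_one_div_of_le (by linarith) (by linarith)
  unfold kineticCoeff
  linarith

/-- A branch `c ↦ (η c, v c)`, `c ∈ [a, b]`, of travelling waves with `c`-derivatives `ηc`, `vc`,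
with uniform exponential decay and `η` uniformly bounded away from `1`. -/
structure IsWaveBranch (κ a b A C m : ℝ) (η v ηc vc : ℝ → ℝ → ℝ) : Prop where
  kappa_lt : κ < 1 / 2
  left_pos : 0 < a
  rate_pos : 0 < C
  gap_pos : 0 < m
  hasDerivAt_eta : ∀ c ∈ Set.Icc a b, ∀ x, HasDerivAt (fun t => η t x) (ηc c x) c
  hasDerivAt_v : ∀ c ∈ Set.Icc a b, ∀ x, HasDerivAt (fun t => v t x) (vc c x) c
  contDiff_eta : ∀ c ∈ Set.Icc a b, ContDiff ℝ 2 (η c)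
  continuous_v : ∀ c ∈ Set.Icc a b, Continuous (v c)
  continuousAt_deriv : ∀ c ∈ Set.Ioo a b, ∀ x, ContinuousAt (fun t => deriv (η t) x) c
  eta_pos : ∀ c ∈ Set.Icc a b, ∀ x, 0 < η c x
  le_one_sub : ∀ c ∈ Set.Icc a b, ∀ x, m ≤ 1 - η c x
  abs_eta_le : ∀ c ∈ Set.Icc a b, ∀ x, |η c x| ≤ A * Real.exp (-C * |x|)
  abs_deriv_le : ∀ c ∈ Set.Icc a b, ∀ x, |deriv (η c) x| ≤ A * Real.exp (-C * |x|)
  abs_deriv2_le : ∀ c ∈ Set.Icc a b, ∀ x, |deriv (deriv (η c)) x| ≤ A * Real.exp (-C * |x|)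
  abs_v_le : ∀ c ∈ Set.Icc a b, ∀ x, |v c x| ≤ A * Real.exp (-C * |x|)
  abs_etac_le : ∀ c ∈ Set.Icc a b, ∀ x, |ηc c x| ≤ A * Real.exp (-C * |x|)
  abs_vc_le : ∀ c ∈ Set.Icc a b, ∀ x, |vc c x| ≤ A * Real.exp (-C * |x|)
  eq_v : ∀ c ∈ Set.Icc a b, ∀ x, -c * η c x = 2 * v c x * (1 - η c x)
  eq_eta : ∀ c ∈ Set.Icc a b, ∀ x, -c * v c x
    = -(deriv (deriv (η c)) x / (2 * (1 - η c x)) + (deriv (η c) x) ^ 2 / (4 * (1 - η c x) ^ 2)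
      + (v c x) ^ 2 - η c x - κ * deriv (deriv (η c)) x)

namespace IsWaveBranch

variable {κ a b A C m : ℝ} {η v ηc vc : ℝ → ℝ → ℝ}

theorem eta_lt_one (h : IsWaveBranch κ a b A C m η v ηc vc) {c : ℝ} (hc : c ∈ Set.Icc a b)
    (x : ℝ) : η c x < 1 := by
  linarith [h.le_one_sub c hc x, h.gap_pos]

theorem exp_le_one (h : IsWaveBranch κ a b A C m η v ηc vc) (x : ℝ) :
    Real.exp (-C * |x|) ≤ 1 :=
  Real.exp_le_one_iff.2 (by nlinarith [h.rate_pos, abs_nonneg x])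

theorem nonneg_of_mem (h : IsWaveBranch κ a b A C m η v ηc vc) {c : ℝ} (hc : c ∈ Set.Icc a b) :
    0 ≤ A :=
  nonneg_of_mul_nonneg_left ((abs_nonneg _).trans (h.abs_eta_le c hc 0)) (Real.exp_pos _)

theorem decay_le (h : IsWaveBranch κ a b A C m η v ηc vc) {c : ℝ} (hc : c ∈ Set.Icc a b)
    (x : ℝ) : A * Real.exp (-C * |x|) ≤ A :=
  mul_le_of_le_one_right (h.nonneg_of_mem hc) (h.exp_le_one x)

theorem differentiable_eta (h : IsWaveBranch κ a b A C m η v ηc vc) {c : ℝ}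
    (hc : c ∈ Set.Icc a b) : Differentiable ℝ (η c) :=
  (h.contDiff_eta c hc).differentiable (by norm_num)

theorem contDiff_deriv (h : IsWaveBranch κ a b A C m η v ηc vc) {c : ℝ}
    (hc : c ∈ Set.Icc a b) : ContDiff ℝ 1 (deriv (η c)) :=
  (contDiff_succ_iff_deriv (n := 1).1 (by simpa [one_add_one_eq_two] using h.contDiff_eta c hc)).2.2

theorem continuous_deriv2 (h : IsWaveBranch κ a b A C m η v ηc vc) {c : ℝ}
    (hc : c ∈ Set.Icc a b) : Continuous (deriv (deriv (η c))) :=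
  (h.contDiff_deriv hc).continuous_deriv le_rfl

theorem continuous_kineticCoeff (h : IsWaveBranch κ a b A C m η v ηc vc) {c : ℝ}
    (hc : c ∈ Set.Icc a b) : Continuous fun x => kineticCoeff κ (η c x) :=
  continuous_iff_continuousAt.2 fun x =>
    (hasDerivAt_kineticCoeff κ (h.eta_lt_one hc x)).continuousAt.comp
      (h.differentiable_eta hc).continuous.continuousAt

theorem abs_kineticCoeff_le (h : IsWaveBranch κ a b A C m η v ηc vc) {c : ℝ}
    (hc : c ∈ Set.Icc a b) (x : ℝ) : |kineticCoeff κ (η c x)| ≤ 1 / (4 * m) + |κ / 2| := by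
  have hm := h.gap_pos
  have hle := h.le_one_sub c hc x
  have h1 : 0 < 1 - η c x := hm.trans_le hle
  refine (abs_sub _ _).trans (add_le_add ?_ le_rfl)
  rw [abs_of_nonneg (by positivity)]
  gcongr

theorem abs_inv_sq_le (h : IsWaveBranch κ a b A C m η v ηc vc) {c : ℝ}
    (hc : c ∈ Set.Icc a b) (x : ℝ) : |1 / (4 * (1 - η c x) ^ 2)| ≤ 1 / (4 * m ^ 2) := by
  have hm := h.gap_pos
  have hle := h.le_one_sub c hc x
  rw [abs_of_nonneg (by positivity)]
  gcongr

theorem abs_slope_eta_le (h : IsWaveBranch κ a b A C m η v ηc vc) {s t : ℝ}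
    (hs : s ∈ Set.Icc a b) (ht : t ∈ Set.Icc a b) (x : ℝ) :
    |slope (fun r => η r x) s t| ≤ A * Real.exp (-C * |x|) :=
  abs_slope_le (fun r hr => h.hasDerivAt_eta r hr x) (fun r hr => h.abs_etac_le r hr x) hs ht

theorem hasDerivAt_kineticCoeff_eta (h : IsWaveBranch κ a b A C m η v ηc vc) {c : ℝ}
    (hc : c ∈ Set.Icc a b) (x : ℝ) : HasDerivAt (fun r => kineticCoeff κ (η r x))
      (1 / (4 * (1 - η c x) ^ 2) * ηc c x) c :=
  HasDerivAt.comp (h₂ := kineticCoeff κ) c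
    (hasDerivAt_kineticCoeff κ (h.eta_lt_one hc x)) (h.hasDerivAt_eta c hc x)

theorem abs_slope_kineticCoeff_le (h : IsWaveBranch κ a b A C m η v ηc vc) {s t : ℝ}
    (hs : s ∈ Set.Icc a b) (ht : t ∈ Set.Icc a b) (x : ℝ) :
    |slope (fun r => kineticCoeff κ (η r x)) s t|
      ≤ 1 / (4 * m ^ 2) * (A * Real.exp (-C * |x|)) :=
  abs_slope_le (fun _ hr => h.hasDerivAt_kineticCoeff_eta hr x)
    (fun _ hr => abs_mul_le_of_abs_le (h.abs_inv_sq_le hr x) (h.abs_etac_le _ hr x)) hs ht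

theorem hasDerivAt_potentialDensity (h : IsWaveBranch κ a b A C m η v ηc vc) {c : ℝ}
    (hc : c ∈ Set.Icc a b) (x : ℝ) : HasDerivAt (fun r => potentialDensity r (η r x) (v r x))
      ((-(v c x) ^ 2 + η c x + c * v c x) * ηc c x + η c x * v c x) c := by
  have hη := h.hasDerivAt_eta c hc x
  have hv := h.hasDerivAt_v c hc x
  refine ((((hv.fun_pow 2).fun_mul (hη.const_sub 1)).fun_add ((hη.fun_pow 2).div_const 2)).fun_add
    ((hasDerivAt_id' c).fun_mul (hη.fun_mul hv))).congr_deriv ?_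
  norm_num
  linear_combination (-vc c x) * h.eq_v c hc x

theorem abs_slope_potentialDensity_le (h : IsWaveBranch κ a b A C m η v ηc vc) {s t : ℝ}
    (hs : s ∈ Set.Icc a b) (ht : t ∈ Set.Icc a b) (x : ℝ) :
    |slope (fun r => potentialDensity r (η r x) (v r x)) s t|
      ≤ (A ^ 2 + A + b * A + A) * (A * Real.exp (-C * |x|)) := by
  refine abs_slope_le (fun _ hr => h.hasDerivAt_potentialDensity hr x) (fun r hr => ?_) hs ht
  have hη := (h.abs_eta_le r hr x).trans (h.decay_le hr x)
  have hv := (h.abs_v_le r hr x).trans (h.decay_le hr x)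
  have hr' : |r| ≤ b := by
    rw [abs_of_pos (h.left_pos.trans_le hr.1)]
    exact hr.2
  have h1 : |-(v r x) ^ 2 + η r x + r * v r x| ≤ A ^ 2 + A + b * A := by
    refine (abs_add_le _ _).trans (add_le_add ((abs_add_le _ _).trans (add_le_add ?_ hη))
      (abs_mul_le_of_abs_le hr' hv))
    rw [abs_neg, abs_pow]
    gcongr
  calc _ ≤ _ := abs_add_le _ _
    _ ≤ (A ^ 2 + A + b * A) * (A * Real.exp (-C * |x|)) + A * (A * Real.exp (-C * |x|)) :=
      add_le_add (abs_mul_le_of_abs_le h1 (h.abs_etac_le r hr x))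
        (abs_mul_le_of_abs_le hη (h.abs_v_le r hr x))
    _ = _ := by ring

theorem two_mul_kineticCoeff_mul_deriv2 (h : IsWaveBranch κ a b A C m η v ηc vc) {c : ℝ}
    (hc : c ∈ Set.Icc a b) (x : ℝ) : 2 * kineticCoeff κ (η c x) * deriv (deriv (η c)) x
      = c * v c x - 1 / (4 * (1 - η c x) ^ 2) * (deriv (η c) x) ^ 2 - (v c x) ^ 2 + η c x := by
  have h1 : 1 - η c x ≠ 0 := by linarith [h.eta_lt_one hc x]
  have h2 := h.eq_eta c hc x
  have h3 : 2 * kineticCoeff κ (η c x) = 1 / (2 * (1 - η c x)) - κ := by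
    unfold kineticCoeff
    field_simp
    ring
  rw [h3]
  linear_combination h2

theorem continuousAt_deriv2 (h : IsWaveBranch κ a b A C m η v ηc vc) {c : ℝ}
    (hc : c ∈ Set.Ioo a b) (x : ℝ) : ContinuousAt (fun t => deriv (deriv (η t)) x) c := by
  have hc' := Set.Ioo_subset_Icc_self hc
  have hη := (h.hasDerivAt_eta c hc' x).continuousAt
  have hv := (h.hasDerivAt_v c hc' x).continuousAt
  have hk := (h.hasDerivAt_kineticCoeff_eta hc' x).continuousAt
  have hd := h.continuousAt_deriv c hc x
  have hpos : ∀ t ∈ Set.Icc a b, 2 * kineticCoeff κ (η t x) ≠ 0 := fun t ht =>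
    (mul_pos two_pos (kineticCoeff_pos h.kappa_lt (h.eta_pos t ht x) (h.eta_lt_one ht x))).ne'
  have h1 : 4 * (1 - η c x) ^ 2 ≠ 0 := by
    have := h.eta_lt_one hc' x
    have : 0 < 1 - η c x := by linarith
    positivity
  have key : ContinuousAt (fun t => (t * v t x - 1 / (4 * (1 - η t x) ^ 2) * (deriv (η t) x) ^ 2
      - (v t x) ^ 2 + η t x) / (2 * kineticCoeff κ (η t x))) c := by
    refine ContinuousAt.div ?_ (continuousAt_const.mul hk) (hpos c hc')
    exact (((continuousAt_id.mul hv).sub ((continuousAt_const.div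
      (continuousAt_const.mul ((continuousAt_const.sub hη).pow 2)) h1).mul (hd.pow 2))).sub
      (hv.pow 2)).add hη
  refine key.congr ?_
  filter_upwards [Icc_mem_nhds hc.1 hc.2] with t ht
  rw [div_eq_iff (hpos t ht), ← h.two_mul_kineticCoeff_mul_deriv2 ht x]
  ring

theorem integrable_mul_of_abs_le (h : IsWaveBranch κ a b A C m η v ηc vc) {f g : ℝ → ℝ} {P Q : ℝ}
    (hf : Continuous f) (hg : Continuous g) (hfP : ∀ x, |f x| ≤ P)
    (hgQ : ∀ x, |g x| ≤ Q * Real.exp (-C * |x|)) : Integrable fun x => f x * g x :=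
  integrable_of_abs_le_exp (M := P * Q) h.rate_pos (hf.mul hg) fun x =>
    (abs_mul_le_of_abs_le (hfP x) (hgQ x)).trans_eq (mul_assoc _ _ _).symm

theorem integrable_eta_mul_v (h : IsWaveBranch κ a b A C m η v ηc vc) {c : ℝ}
    (hc : c ∈ Set.Icc a b) : Integrable fun x => η c x * v c x :=
  h.integrable_mul_of_abs_le (h.differentiable_eta hc).continuous (h.continuous_v c hc)
    (fun x => (h.abs_eta_le c hc x).trans (h.decay_le hc x)) (h.abs_v_le c hc)

theorem integrable_kinetic (h : IsWaveBranch κ a b A C m η v ηc vc) {c : ℝ}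
    (hc : c ∈ Set.Icc a b) : Integrable fun x => kineticCoeff κ (η c x) * (deriv (η c) x) ^ 2 := by
  have hd := (h.contDiff_deriv hc).continuous
  have := h.integrable_mul_of_abs_le ((h.continuous_kineticCoeff hc).mul hd) hd
    (fun x => abs_mul_le_of_abs_le (h.abs_kineticCoeff_le hc x)
      ((h.abs_deriv_le c hc x).trans (h.decay_le hc x))) (h.abs_deriv_le c hc)
  exact this.congr (Eventually.of_forall fun x => by simp only [Pi.mul_apply]; ring)

theorem integrable_v_sq (h : IsWaveBranch κ a b A C m η v ηc vc) {c : ℝ}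
    (hc : c ∈ Set.Icc a b) : Integrable fun x => (v c x) ^ 2 * (1 - η c x) + (η c x) ^ 2 / 2 := by
  have hη := (h.differentiable_eta hc).continuous
  have hv := h.continuous_v c hc
  have h1 := h.integrable_mul_of_abs_le (f := fun x => v c x * (1 - η c x)) (P := A * 1)
    (hv.mul (continuous_const.sub hη)) hv
    (fun x => abs_mul_le_of_abs_le ((h.abs_v_le c hc x).trans (h.decay_le hc x))
      (abs_le.2 ⟨by linarith [h.eta_lt_one hc x], by linarith [h.eta_pos c hc x]⟩))
    (h.abs_v_le c hc)
  have h2 := h.integrable_mul_of_abs_le hη hη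
    (fun x => (h.abs_eta_le c hc x).trans (h.decay_le hc x)) (h.abs_eta_le c hc)
  exact (h1.add (h2.div_const 2)).congr (Eventually.of_forall fun x => by
    simp only [Pi.add_apply]; ring)

theorem integrable_potentialDensity (h : IsWaveBranch κ a b A C m η v ηc vc) {c : ℝ}
    (hc : c ∈ Set.Icc a b) : Integrable fun x => potentialDensity c (η c x) (v c x) :=
  (h.integrable_v_sq hc).add ((h.integrable_eta_mul_v hc).const_mul c)

theorem energy_sub_momentum (h : IsWaveBranch κ a b A C m η v ηc vc) {c : ℝ}
    (hc : c ∈ Set.Icc a b) : Ehy κ (η c) (v c) - c * Phy (η c) (v c)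
      = ∫ x, (kineticCoeff κ (η c x) * (deriv (η c) x) ^ 2
          + potentialDensity c (η c x) (v c x)) := by
  have hE : Ehy κ (η c) (v c) = ∫ x, (kineticCoeff κ (η c x) * (deriv (η c) x) ^ 2
      + ((v c x) ^ 2 * (1 - η c x) + (η c x) ^ 2 / 2)) :=
    integral_congr_ae (Eventually.of_forall fun x => by simp only [kineticCoeff]; ring)
  rw [hE, Phy, mul_neg, sub_neg_eq_add, ← integral_const_mul]
  refine (integral_add ((h.integrable_kinetic hc).add (h.integrable_v_sq hc))
    ((h.integrable_eta_mul_v hc).const_mul c)).symm.trans ?_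
  exact integral_congr_ae (Eventually.of_forall fun x => by
    simp only [potentialDensity, Pi.add_apply]; ring)

/-- The `x`-derivative of `kineticCoeff κ (η c) * (∂ₓ η t + ∂ₓ η c)`. -/
def fluxDeriv (κ : ℝ) (η : ℝ → ℝ → ℝ) (c t x : ℝ) : ℝ :=
  1 / (4 * (1 - η c x) ^ 2) * deriv (η c) x * (deriv (η t) x + deriv (η c) x)
    + kineticCoeff κ (η c x) * (deriv (deriv (η t)) x + deriv (deriv (η c)) x)

theorem hasDerivAt_flux (h : IsWaveBranch κ a b A C m η v ηc vc) {c t : ℝ}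
    (hc : c ∈ Set.Icc a b) (ht : t ∈ Set.Icc a b) (x : ℝ) :
    HasDerivAt (fun y => kineticCoeff κ (η c y) * (deriv (η t) y + deriv (η c) y))
      (fluxDeriv κ η c t x) x := by
  have hd : ∀ s ∈ Set.Icc a b, HasDerivAt (deriv (η s)) (deriv (deriv (η s)) x) x := fun s hs =>
    ((h.contDiff_deriv hs).differentiable one_ne_zero x).hasDerivAt
  have hk : HasDerivAt (fun y => kineticCoeff κ (η c y))
      (1 / (4 * (1 - η c x) ^ 2) * deriv (η c) x) x :=
    HasDerivAt.comp (h₂ := kineticCoeff κ) x (hasDerivAt_kineticCoeff κ (h.eta_lt_one hc x))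
      (h.differentiable_eta hc x).hasDerivAt
  exact hk.fun_mul ((hd t ht).fun_add (hd c hc))

theorem continuous_fluxDeriv (h : IsWaveBranch κ a b A C m η v ηc vc) {c t : ℝ}
    (hc : c ∈ Set.Icc a b) (ht : t ∈ Set.Icc a b) : Continuous (fluxDeriv κ η c t) := by
  have hη := (h.differentiable_eta hc).continuous
  have hne : ∀ x, 4 * (1 - η c x) ^ 2 ≠ 0 := fun x => by
    have : 0 < 1 - η c x := by linarith [h.eta_lt_one hc x]
    positivity
  have hdc := (h.contDiff_deriv hc).continuous
  have hdt := (h.contDiff_deriv ht).continuous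
  exact (((continuous_const.div (by fun_prop) hne).mul hdc).mul (hdt.add hdc)).add
    ((h.continuous_kineticCoeff hc).mul ((h.continuous_deriv2 ht).add (h.continuous_deriv2 hc)))

theorem exists_abs_fluxDeriv_le (h : IsWaveBranch κ a b A C m η v ηc vc) :
    ∃ N, ∀ c ∈ Set.Icc a b, ∀ t ∈ Set.Icc a b, ∀ x, |fluxDeriv κ η c t x| ≤ N := by
  refine ⟨1 / (4 * m ^ 2) * A * (A + A) + (1 / (4 * m) + |κ / 2|) * (A + A),
    fun c hc t ht x => ?_⟩
  have h1 : ∀ s ∈ Set.Icc a b, |deriv (η s) x| ≤ A := fun s hs =>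
    (h.abs_deriv_le s hs x).trans (h.decay_le hs x)
  have h2 : ∀ s ∈ Set.Icc a b, |deriv (deriv (η s)) x| ≤ A := fun s hs =>
    (h.abs_deriv2_le s hs x).trans (h.decay_le hs x)
  refine (abs_add_le _ _).trans (add_le_add ?_ ?_)
  · exact abs_mul_le_of_abs_le (abs_mul_le_of_abs_le (h.abs_inv_sq_le hc x) (h1 c hc))
      ((abs_add_le _ _).trans (add_le_add (h1 t ht) (h1 c hc)))
  · exact abs_mul_le_of_abs_le (h.abs_kineticCoeff_le hc x)
      ((abs_add_le _ _).trans (add_le_add (h2 t ht) (h2 c hc)))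

theorem abs_eta_sub_le (h : IsWaveBranch κ a b A C m η v ηc vc) {c t : ℝ}
    (hc : c ∈ Set.Icc a b) (ht : t ∈ Set.Icc a b) (x : ℝ) :
    |η t x - η c x| ≤ (A + A) * Real.exp (-C * |x|) :=
  ((abs_sub _ _).trans (add_le_add (h.abs_eta_le t ht x) (h.abs_eta_le c hc x))).trans_eq
    (add_mul _ _ _).symm

theorem integrable_fluxDeriv_mul (h : IsWaveBranch κ a b A C m η v ηc vc) {c t : ℝ}
    (hc : c ∈ Set.Icc a b) (ht : t ∈ Set.Icc a b) :
    Integrable fun x => fluxDeriv κ η c t x * (η t x - η c x) := by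
  obtain ⟨N, hN⟩ := h.exists_abs_fluxDeriv_le
  exact h.integrable_mul_of_abs_le (h.continuous_fluxDeriv hc ht)
    ((h.differentiable_eta ht).continuous.sub (h.differentiable_eta hc).continuous)
    (hN c hc t ht) (h.abs_eta_sub_le hc ht)

theorem integrable_flux_mul_deriv (h : IsWaveBranch κ a b A C m η v ηc vc) {c t : ℝ}
    (hc : c ∈ Set.Icc a b) (ht : t ∈ Set.Icc a b) :
    Integrable fun x => kineticCoeff κ (η c x) * (deriv (η t) x + deriv (η c) x)
      * (deriv (η t) x - deriv (η c) x) := by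
  have hdc := (h.contDiff_deriv hc).continuous
  have hdt := (h.contDiff_deriv ht).continuous
  refine h.integrable_mul_of_abs_le (P := (1 / (4 * m) + |κ / 2|) * (A + A)) (Q := A + A)
    ((h.continuous_kineticCoeff hc).mul (hdt.add hdc)) (hdt.sub hdc) (fun x => ?_) fun x => ?_
  · exact abs_mul_le_of_abs_le (h.abs_kineticCoeff_le hc x) ((abs_add_le _ _).trans (add_le_add
      ((h.abs_deriv_le t ht x).trans (h.decay_le ht x))
      ((h.abs_deriv_le c hc x).trans (h.decay_le hc x))))
  · exact ((abs_sub _ _).trans (add_le_add (h.abs_deriv_le t ht x)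
      (h.abs_deriv_le c hc x))).trans_eq (add_mul _ _ _).symm

theorem integral_flux_mul_deriv (h : IsWaveBranch κ a b A C m η v ηc vc) {c t : ℝ}
    (hc : c ∈ Set.Icc a b) (ht : t ∈ Set.Icc a b) :
    ∫ x, kineticCoeff κ (η c x) * (deriv (η t) x + deriv (η c) x)
        * (deriv (η t) x - deriv (η c) x)
      = -∫ x, fluxDeriv κ η c t x * (η t x - η c x) := by
  have hdc := (h.contDiff_deriv hc).continuous
  have hdt := (h.contDiff_deriv ht).continuous
  refine integral_mul_deriv_eq_deriv_mul_of_integrable (fun x _ => h.hasDerivAt_flux hc ht x)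
    (fun x _ => (h.differentiable_eta ht x).hasDerivAt.fun_sub
      (h.differentiable_eta hc x).hasDerivAt)
    (h.integrable_flux_mul_deriv hc ht) (h.integrable_fluxDeriv_mul hc ht) ?_
  refine h.integrable_mul_of_abs_le (P := (1 / (4 * m) + |κ / 2|) * (A + A)) (Q := A + A)
    ((h.continuous_kineticCoeff hc).mul (hdt.add hdc))
    ((h.differentiable_eta ht).continuous.sub (h.differentiable_eta hc).continuous) (fun x => ?_)
    (h.abs_eta_sub_le hc ht)
  exact abs_mul_le_of_abs_le (h.abs_kineticCoeff_le hc x) ((abs_add_le _ _).trans (add_le_add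
    ((h.abs_deriv_le t ht x).trans (h.decay_le ht x))
    ((h.abs_deriv_le c hc x).trans (h.decay_le hc x))))

/-- The integrand obtained from the difference quotient of `E - c P` by integrating the difference
of the gradient terms by parts. -/
def slopeDensity (κ : ℝ) (η v : ℝ → ℝ → ℝ) (c t x : ℝ) : ℝ :=
  slope (fun r => kineticCoeff κ (η r x)) c t * (deriv (η t) x) ^ 2
    + slope (fun r => potentialDensity r (η r x) (v r x)) c t
    - fluxDeriv κ η c t x * slope (fun r => η r x) c t

theorem slope_energy_sub_momentum (h : IsWaveBranch κ a b A C m η v ηc vc) {c t : ℝ}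
    (hc : c ∈ Set.Icc a b) (ht : t ∈ Set.Icc a b) :
    slope (fun r => Ehy κ (η r) (v r) - r * Phy (η r) (v r)) c t
      = ∫ x, slopeDensity κ η v c t x := by
  have hF := fun s hs =>
    (h.integrable_kinetic (c := s) hs).add (h.integrable_potentialDensity (c := s) hs)
  have hu := h.integrable_flux_mul_deriv hc ht
  have hw := h.integrable_fluxDeriv_mul hc ht
  rw [slope_def_field, h.energy_sub_momentum hc, h.energy_sub_momentum ht]
  have hsum : (∫ x, (kineticCoeff κ (η t x) * (deriv (η t) x) ^ 2
        + potentialDensity t (η t x) (v t x)))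
      - ∫ x, (kineticCoeff κ (η c x) * (deriv (η c) x) ^ 2 + potentialDensity c (η c x) (v c x))
      = ∫ x, ((t - c) * slopeDensity κ η v c t x) := by
    have hR := ((hF t ht).sub (hF c hc)).sub hu
    have hsplit := integral_add hR hu
    have hsplit' := integral_sub hR hw
    rw [h.integral_flux_mul_deriv hc ht, ← sub_eq_add_neg, ← hsplit'] at hsplit
    refine (integral_sub (hF t ht) (hF c hc)).symm.trans (Eq.trans ?_ (hsplit.trans ?_))
    · exact integral_congr_ae (Eventually.of_forall fun x => by
        simp only [Pi.add_apply, Pi.sub_apply]; ring)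
    · refine integral_congr_ae (Eventually.of_forall fun x => ?_)
      have hs : ∀ f : ℝ → ℝ, (t - c) * slope f c t = f t - f c := fun f => sub_smul_slope f c t
      have h1 := hs fun r => kineticCoeff κ (η r x)
      have h2 := hs fun r => potentialDensity r (η r x) (v r x)
      have h3 := hs fun r => η r x
      simp only [Pi.add_apply, Pi.sub_apply, slopeDensity]
      linear_combination -(deriv (η t) x) ^ 2 * h1 - h2 + fluxDeriv κ η c t x * h3
  rw [hsum, integral_const_mul]
  rcases eq_or_ne t c with rfl | hne
  · simp [slopeDensity, fluxDeriv]
  · rw [mul_div_cancel_left₀ _ (sub_ne_zero.2 hne)]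

theorem continuous_slopeDensity (h : IsWaveBranch κ a b A C m η v ηc vc) {c t : ℝ}
    (hc : c ∈ Set.Icc a b) (ht : t ∈ Set.Icc a b) : Continuous (slopeDensity κ η v c t) := by
  have hηc := (h.differentiable_eta hc).continuous
  have hηt := (h.differentiable_eta ht).continuous
  have hvc := h.continuous_v c hc
  have hvt := h.continuous_v t ht
  have hkc := h.continuous_kineticCoeff hc
  have hkt := h.continuous_kineticCoeff ht
  have hdt := (h.contDiff_deriv ht).continuous
  have hfl := h.continuous_fluxDeriv hc ht
  unfold slopeDensity
  simp only [slope_def_field, potentialDensity]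
  fun_prop

theorem exists_abs_slopeDensity_le (h : IsWaveBranch κ a b A C m η v ηc vc) :
    ∃ M, ∀ c ∈ Set.Icc a b, ∀ t ∈ Set.Icc a b, ∀ x,
      |slopeDensity κ η v c t x| ≤ M * Real.exp (-C * |x|) := by
  obtain ⟨N, hN⟩ := h.exists_abs_fluxDeriv_le
  refine ⟨1 / (4 * m ^ 2) * A * A ^ 2 + (A ^ 2 + A + b * A + A) * A + N * A,
    fun c hc t ht x => ?_⟩
  have h0 : |deriv (η t) x ^ 2| ≤ A ^ 2 := by
    rw [abs_pow]
    gcongr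
    exact (h.abs_deriv_le t ht x).trans (h.decay_le ht x)
  have h1 := abs_mul_le_of_abs_le (h.abs_slope_kineticCoeff_le hc ht x) h0
  have h2 := h.abs_slope_potentialDensity_le hc ht x
  have h3 := abs_mul_le_of_abs_le (hN c hc t ht x) (h.abs_slope_eta_le hc ht x)
  calc _ ≤ _ := (abs_sub _ _).trans (add_le_add ((abs_add_le _ _).trans (add_le_add h1 h2)) h3)
    _ = _ := by ring

theorem tendsto_slopeDensity (h : IsWaveBranch κ a b A C m η v ηc vc) {c : ℝ}
    (hc : c ∈ Set.Ioo a b) (x : ℝ) :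
    Tendsto (fun t => slopeDensity κ η v c t x) (nhdsWithin c {c}ᶜ) (nhds (η c x * v c x)) := by
  have hc' := Set.Ioo_subset_Icc_self hc
  have hk := hasDerivAt_iff_tendsto_slope.1 (h.hasDerivAt_kineticCoeff_eta hc' x)
  have hp := hasDerivAt_iff_tendsto_slope.1 (h.hasDerivAt_potentialDensity hc' x)
  have hη := hasDerivAt_iff_tendsto_slope.1 (h.hasDerivAt_eta c hc' x)
  have hd : Tendsto (fun t => deriv (η t) x) (nhdsWithin c {c}ᶜ) (nhds (deriv (η c) x)) :=
    (h.continuousAt_deriv c hc x).tendsto.mono_left nhdsWithin_le_nhds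
  have hd2 : Tendsto (fun t => deriv (deriv (η t)) x) (nhdsWithin c {c}ᶜ)
      (nhds (deriv (deriv (η c)) x)) :=
    (h.continuousAt_deriv2 hc x).tendsto.mono_left nhdsWithin_le_nhds
  have hfl : Tendsto (fun t => fluxDeriv κ η c t x) (nhdsWithin c {c}ᶜ)
      (nhds (fluxDeriv κ η c c x)) :=
    ((hd.add_const _).const_mul _).add ((hd2.add_const _).const_mul _)
  have key := ((hk.mul (hd.pow 2)).add hp).sub (hfl.mul hη)
  have hlim : η c x * v c x = 1 / (4 * (1 - η c x) ^ 2) * ηc c x * deriv (η c) x ^ 2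
      + ((-v c x ^ 2 + η c x + c * v c x) * ηc c x + η c x * v c x)
      - fluxDeriv κ η c c x * ηc c x := by
    simp only [fluxDeriv]
    linear_combination ηc c x * h.two_mul_kineticCoeff_mul_deriv2 hc' x
  rw [hlim]
  exact key

theorem hasDerivAt_energy_sub_momentum (h : IsWaveBranch κ a b A C m η v ηc vc) {c : ℝ}
    (hc : c ∈ Set.Ioo a b) :
    HasDerivAt (fun t => Ehy κ (η t) (v t) - t * Phy (η t) (v t)) (-(Phy (η c) (v c))) c := by
  have hc' := Set.Ioo_subset_Icc_self hc
  have hmem : ∀ᶠ t in nhdsWithin c {c}ᶜ, t ∈ Set.Icc a b :=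
    nhdsWithin_le_nhds (Icc_mem_nhds hc.1 hc.2)
  obtain ⟨M, hM⟩ := h.exists_abs_slopeDensity_le
  rw [hasDerivAt_iff_tendsto_slope, Phy, neg_neg]
  refine (tendsto_integral_filter_of_dominated_convergence
    (fun x => M * Real.exp (-C * |x|)) ?_ ?_ ((integrable_exp_neg_mul_abs h.rate_pos).const_mul M)
    (Eventually.of_forall (h.tendsto_slopeDensity hc))).congr' ?_
  · filter_upwards [hmem] with t ht
    exact (h.continuous_slopeDensity hc' ht).aestronglyMeasurable
  · filter_upwards [hmem] with t ht
    exact Eventually.of_forall (hM c hc' t ht)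
  · filter_upwards [hmem] with t ht
    exact (h.slope_energy_sub_momentum hc' ht).symm

end IsWaveBranch

theorem exists_isWaveBranch {κ c₁ c₂ a b : ℝ} (hκ : κ < 1 / 2) (hc₁ : 0 < c₁)
    (ha : c₁ < a) (hb₂ : b < c₂) {η v : ℝ → ℝ → ℝ}
    (hjoint : ContDiffOn ℝ 1 (fun p : ℝ × ℝ => (η p.1 p.2, v p.1 p.2))
      (Set.Ioo c₁ c₂ ×ˢ (Set.univ : Set ℝ)))
    (hxreg : ∀ c : ℝ, c ∈ Set.Ioo c₁ c₂ → ContDiff ℝ 2 (η c) ∧ ContDiff ℝ 1 (v c))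
    (hb : ∀ c : ℝ, c ∈ Set.Ioo c₁ c₂ → ∀ x : ℝ, 0 < η c x ∧ η c x < 1)
    (hdec : ∀ K : Set ℝ, IsCompact K → K ⊆ Set.Ioo c₁ c₂ →
      ∃ A C : ℝ, 0 < A ∧ 0 < C ∧ ∀ c : ℝ, c ∈ K → ∀ x : ℝ,
        |η c x| + |deriv (η c) x| + |deriv (deriv (η c)) x| + |v c x|
          + |deriv (fun c' : ℝ => η c' x) c| + |deriv (fun c' : ℝ => v c' x) c|
          ≤ A * Real.exp (-C * |x|))
    (hsys : ∀ c : ℝ, c ∈ Set.Ioo c₁ c₂ → ∀ x : ℝ,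
      (-c * η c x = 2 * v c x * (1 - η c x)) ∧
      (-c * v c x
        = -(deriv (deriv (η c)) x / (2 * (1 - η c x))
            + (deriv (η c) x) ^ 2 / (4 * (1 - η c x) ^ 2)
            + (v c x) ^ 2 - η c x - κ * deriv (deriv (η c)) x))) :
    ∃ A C m, IsWaveBranch κ a b A C m η v (fun c x => deriv (fun t => η t x) c)
      (fun c x => deriv (fun t => v t x) c) := by
  have hsub : Set.Icc a b ⊆ Set.Ioo c₁ c₂ := fun c hc =>
    ⟨ha.trans_le hc.1, hc.2.trans_lt hb₂⟩
  obtain ⟨A, C, hA, hC, hAC⟩ := hdec _ isCompact_Icc hsub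
  have ha0 : 0 < a := hc₁.trans ha
  have hopen : IsOpen (Set.Ioo c₁ c₂ ×ˢ (Set.univ : Set ℝ)) := isOpen_Ioo.prod isOpen_univ
  have hη1 : ContDiffOn ℝ 1 (fun p : ℝ × ℝ => η p.1 p.2) (Set.Ioo c₁ c₂ ×ˢ Set.univ) := hjoint.fst
  have hv1 : ContDiffOn ℝ 1 (fun p : ℝ × ℝ => v p.1 p.2) (Set.Ioo c₁ c₂ ×ˢ Set.univ) := hjoint.snd
  have hslice : ∀ {f : ℝ → ℝ → ℝ},
      ContDiffOn ℝ 1 (fun p : ℝ × ℝ => f p.1 p.2) (Set.Ioo c₁ c₂ ×ˢ Set.univ) →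
      ∀ c ∈ Set.Icc a b, ∀ x, HasDerivAt (fun t => f t x) (deriv (fun t => f t x) c) c := by
    intro f hf c hc x
    have hd : DifferentiableAt ℝ (fun p : ℝ × ℝ => f p.1 p.2) (c, x) :=
      (hf.differentiableOn (by norm_num)).differentiableAt
        (hopen.mem_nhds ⟨hsub hc, Set.mem_univ x⟩)
    have hg : DifferentiableAt ℝ (fun t : ℝ => (t, x)) c := by fun_prop
    exact (DifferentiableAt.comp (g := fun p : ℝ × ℝ => f p.1 p.2) c hd hg).hasDerivAt
  have hle : ∀ c ∈ Set.Icc a b, ∀ x, |v c x| ≤ A := by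
    intro c hc x
    have he : Real.exp (-C * |x|) ≤ 1 :=
      Real.exp_le_one_iff.2 (by nlinarith [abs_nonneg x])
    nlinarith [hAC c hc x, abs_nonneg (η c x), abs_nonneg (deriv (η c) x),
      abs_nonneg (deriv (deriv (η c)) x), abs_nonneg (deriv (fun c' : ℝ => η c' x) c),
      abs_nonneg (deriv (fun c' : ℝ => v c' x) c)]
  refine ⟨A, C, min (1 / 2) (a / (4 * A)), hκ, ha0, hC, by positivity, hslice hη1, hslice hv1,
    fun c hc => (hxreg c (hsub hc)).1, fun c hc => (hxreg c (hsub hc)).2.continuous, ?_,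
    fun c hc x => (hb c (hsub hc) x).1, ?_, ?_, ?_, ?_, ?_, ?_, ?_,
    fun c hc x => (hsys c (hsub hc) x).1, fun c hc x => (hsys c (hsub hc) x).2⟩
  · intro c hc x
    have hc' := hsub (Set.Ioo_subset_Icc_self hc)
    have hF : ContinuousAt (fderiv ℝ fun p : ℝ × ℝ => η p.1 p.2) (c, x) :=
      (hη1.continuousOn_fderiv_of_isOpen hopen le_rfl).continuousAt
        (hopen.mem_nhds ⟨hc', Set.mem_univ x⟩)
    have hline : ContinuousAt (fun t : ℝ => (t, x)) c := by fun_prop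
    have hcomp : ContinuousAt
        (fun t : ℝ => fderiv ℝ (fun p : ℝ × ℝ => η p.1 p.2) (t, x) (0, 1)) c :=
      (ContinuousAt.comp (f := fun t : ℝ => (t, x)) hF hline).clm_apply continuousAt_const
    refine hcomp.congr ?_
    filter_upwards [isOpen_Ioo.mem_nhds hc'] with t ht
    have hd : DifferentiableAt ℝ (fun p : ℝ × ℝ => η p.1 p.2) (t, x) :=
      (hη1.differentiableOn (by norm_num)).differentiableAt
        (hopen.mem_nhds ⟨ht, Set.mem_univ x⟩)
    have hg : HasDerivAt (fun y : ℝ => (t, y)) (0, 1) x :=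
      (hasDerivAt_const x t).prodMk (hasDerivAt_id x)
    exact (hd.hasFDerivAt.comp_hasDerivAt (f := fun y : ℝ => (t, y)) x hg).deriv.symm
  · intro c hc x
    obtain ⟨h0, h1⟩ := hb c (hsub hc) x
    rcases le_or_gt (η c x) (1 / 2) with hx | hx
    · exact (min_le_left _ _).trans (by linarith)
    · refine (min_le_right _ _).trans ?_
      rw [div_le_iff₀ (by positivity)]
      have hv := (abs_le.1 (hle c hc x)).1
      have heq := (hsys c (hsub hc) x).1
      nlinarith [hc.1]
  all_goals
    intro c hc x
    linarith [hAC c hc x, abs_nonneg (η c x), abs_nonneg (deriv (η c) x), abs_nonneg (v c x),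
      abs_nonneg (deriv (deriv (η c)) x), abs_nonneg (deriv (fun c' : ℝ => η c' x) c),
      abs_nonneg (deriv (fun c' : ℝ => v c' x) c)]

/-- along a C¹ branch of traveling waves,
d(c) = E((η_c,v_c)) - cP((η_c,v_c)) satisfies d'(c) = -P((η_c,v_c)); if moreover
c ↦ P((η_c,v_c)) is C¹, then d'' (c) = -(d/dc)P((η_c,v_c)). -/
theorem stmt17 (κ c₁ c₂ : ℝ) (hκ : κ < 1 / 2) (hc₁ : 0 < c₁) (hc₁₂ : c₁ < c₂)
    (hc₂ : c₂ < Real.sqrt 2)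
    (η v : ℝ → ℝ → ℝ)
    (hjoint : ContDiffOn ℝ 1 (fun p : ℝ × ℝ => (η p.1 p.2, v p.1 p.2))
      (Set.Ioo c₁ c₂ ×ˢ (Set.univ : Set ℝ)))
    (hxreg : ∀ c : ℝ, c ∈ Set.Ioo c₁ c₂ → ContDiff ℝ 2 (η c) ∧ ContDiff ℝ 1 (v c))
    (hb : ∀ c : ℝ, c ∈ Set.Ioo c₁ c₂ → ∀ x : ℝ, 0 < η c x ∧ η c x < 1)
    (hdec : ∀ K : Set ℝ, IsCompact K → K ⊆ Set.Ioo c₁ c₂ →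
      ∃ A C : ℝ, 0 < A ∧ 0 < C ∧ ∀ c : ℝ, c ∈ K → ∀ x : ℝ,
        |η c x| + |deriv (η c) x| + |deriv (deriv (η c)) x| + |v c x|
          + |deriv (fun c' : ℝ => η c' x) c| + |deriv (fun c' : ℝ => v c' x) c|
          ≤ A * Real.exp (-C * |x|))
    (hsys : ∀ c : ℝ, c ∈ Set.Ioo c₁ c₂ → ∀ x : ℝ,
      (-c * η c x = 2 * v c x * (1 - η c x)) ∧
      (-c * v c x
        = -(deriv (deriv (η c)) x / (2 * (1 - η c x))
            + (deriv (η c) x) ^ 2 / (4 * (1 - η c x) ^ 2)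
            + (v c x) ^ 2 - η c x - κ * deriv (deriv (η c)) x))) :
    (∀ c : ℝ, c ∈ Set.Ioo c₁ c₂ →
      HasDerivAt (fun c' : ℝ => Ehy κ (η c') (v c') - c' * Phy (η c') (v c'))
        (-(Phy (η c) (v c))) c) ∧
    (ContDiffOn ℝ 1 (fun c : ℝ => Phy (η c) (v c)) (Set.Ioo c₁ c₂) →
      ∀ c : ℝ, c ∈ Set.Ioo c₁ c₂ →
        HasDerivAt (deriv (fun c' : ℝ => Ehy κ (η c') (v c') - c' * Phy (η c') (v c')))
          (-(deriv (fun c' : ℝ => Phy (η c') (v c')) c)) c) := by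
  have hfirst : ∀ c : ℝ, c ∈ Set.Ioo c₁ c₂ →
      HasDerivAt (fun c' : ℝ => Ehy κ (η c') (v c') - c' * Phy (η c') (v c'))
        (-(Phy (η c) (v c))) c := by
    intro c hc
    obtain ⟨a, ha, hac⟩ := exists_between hc.1
    obtain ⟨b, hcb, hb₂⟩ := exists_between hc.2
    obtain ⟨A, C, m, h⟩ := exists_isWaveBranch hκ hc₁ ha hb₂ hjoint hxreg hb hdec hsys
    exact h.hasDerivAt_energy_sub_momentum ⟨hac, hcb⟩
  refine ⟨hfirst, fun hP c hc => ?_⟩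
  have hnhds := isOpen_Ioo.mem_nhds hc
  have hPd := ((hP.differentiableOn (by norm_num)).differentiableAt hnhds).hasDerivAt
  refine hPd.neg.congr_of_eventuallyEq ?_
  filter_upwards [hnhds] with t ht
  exact (hfirst t ht).deriv
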